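/- arXiv:2002.00025 — 2 statements merged into one kernel-verified Lean document; each statement's English description precedes it below -/
import Mathlib

section
/- Let a_h > 2 and a_r ≥ 0. Then there exists C > 0 satisfying the GRU mean-field fixed-point equation C = ∫ tanh(a_h·√(C·R(C))·x)² dγ(x), where R(C) = ∫ σ(a_r·√C·x)² dγ(x) and γ is the standard Gaussian measure on ℝ. -/
/-!
Write `tanh u = u * φ u`, where `φ = dslope tanh 0` is continuous with `φ 0 = 1` and `|φ| ≤ 1`.
For `C ≥ 0` the right-hand side of the fixed-point equation is then `C * H C`, where
`H C = a_h² * R C * G (a_h * √(C * R C))` and `G t = ∫ x² φ(t x)² dγ`. Dominated convergence, with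
dominating functions `1` for `R` and `x²` for `G`, makes `H` continuous on `ℝ`. Its values at the
endpoints of `[0, 1]` are `H 0 = a_h² / 4 > 1`, because `R 0 = σ(0)² = 1/4` and
`G 0 = ∫ x² dγ = 1`, and `H 1 ≤ 1`, because `tanh² ≤ 1`. By the intermediate value theorem
`H C = 1` for some `C ∈ [0, 1]`; this `C` solves the equation, and it is nonzero since `H 0 ≠ 1`.
-/

open MeasureTheory ProbabilityTheory

lemma hasDerivAt_tanh_gru (x : ℝ) :
    HasDerivAt Real.tanh (1 / Real.cosh x ^ 2) x := by
  have h := (Real.hasDerivAt_sinh x).div (Real.hasDerivAt_cosh x) (Real.cosh_pos x).ne'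
  have e : Real.tanh = Real.sinh / Real.cosh := by
    ext y; exact Real.tanh_eq_sinh_div_cosh y
  rw [e]
  have e' : 1 = Real.cosh x * Real.cosh x - Real.sinh x * Real.sinh x := by
    linarith [Real.cosh_sq_sub_sinh_sq x]
  rw [e']
  exact h

lemma abs_tanh_le_gru (x : ℝ) : |Real.tanh x| ≤ |x| := by
  have h := Convex.norm_image_sub_le_of_norm_hasDerivWithin_le (f := Real.tanh) (s := Set.univ)
    (C := 1) (x := 0) (y := x) (fun y _ => (hasDerivAt_tanh_gru y).hasDerivWithinAt)
    (fun y _ => by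
      rw [Real.norm_of_nonneg (by positivity)]
      exact div_le_one_of_le₀ (one_le_pow₀ (Real.one_le_cosh y)) (by positivity))
    convex_univ (Set.mem_univ _) (Set.mem_univ _)
  simpa using h

lemma continuous_dslope_tanh_gru : Continuous (dslope Real.tanh 0) := by
  rw [continuous_iff_continuousAt]
  intro b
  by_cases hb : b = 0
  · subst hb
    exact continuousAt_dslope_same.2 (hasDerivAt_tanh_gru 0).differentiableAt
  · exact (continuousAt_dslope_of_ne hb).2 (hasDerivAt_tanh_gru b).continuousAt

lemma dslope_tanh_zero_gru : dslope Real.tanh 0 0 = 1 := by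
  rw [dslope_same, (hasDerivAt_tanh_gru 0).deriv]; simp

lemma mul_dslope_tanh_gru (x : ℝ) : x * dslope Real.tanh 0 x = Real.tanh x := by
  simpa using sub_smul_dslope Real.tanh 0 x

lemma dslope_tanh_sq_le_gru (x : ℝ) : dslope Real.tanh 0 x ^ 2 ≤ 1 := by
  by_cases hx : x = 0
  · rw [hx, dslope_tanh_zero_gru]; norm_num
  · have h := sq_le_sq.2 (abs_tanh_le_gru x)
    rw [← mul_dslope_tanh_gru x, mul_pow] at h
    have : 0 < x ^ 2 := by positivity
    nlinarith

lemma integrable_sq_gru : Integrable (fun x : ℝ => x ^ 2) (gaussianReal 0 1) :=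
  (memLp_id_gaussianReal (μ := 0) (v := 1) 2).integrable_sq

lemma integral_sq_gru : ∫ x : ℝ, x ^ 2 ∂(gaussianReal 0 1) = 1 := by
  have h := variance_fun_id_gaussianReal (μ := 0) (v := 1)
  rw [variance_eq_integral (by fun_prop)] at h
  simpa [integral_id_gaussianReal] using h

/-- For `a_h > 2` the GRU mean-field fixed-point equation (zero biases) admits a
nonzero solution `C > 0`. -/
theorem gru_exists_nonzero_fixed_point_of_ah_gt_two
    (a_h a_r : ℝ) (hah : 2 < a_h) (har : 0 ≤ a_r)
    (σ : ℝ → ℝ) (hσ : ∀ x, σ x = 1 / (1 + Real.exp (-x))) :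
    ∃ C : ℝ, 0 < C ∧
      C = ∫ x, (Real.tanh (a_h * Real.sqrt
          (C * ∫ y, (σ (a_r * Real.sqrt C * y)) ^ 2 ∂(gaussianReal 0 1)) * x)) ^ 2
        ∂(gaussianReal 0 1) := by
  have hσc : Continuous σ := by
    rw [funext hσ]
    exact continuous_const.div (by fun_prop) (fun x => by positivity)
  have hσb : ∀ x, ‖σ x ^ 2‖ ≤ 1 := fun x => by
    rw [Real.norm_of_nonneg (by positivity), hσ]
    refine pow_le_one₀ (by positivity) (div_le_one_of_le₀ ?_ (by positivity))
    linarith [Real.exp_pos (-x)]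
  set R : ℝ → ℝ := fun C => ∫ y, (σ (a_r * Real.sqrt C * y)) ^ 2 ∂(gaussianReal 0 1) with hR
  have hRc : Continuous R := by
    refine continuous_of_dominated (bound := fun _ => 1) (fun C => ?_)
      (fun C => ae_of_all _ fun y => hσb _) (integrable_const _) (ae_of_all _ fun y => ?_)
    · exact Continuous.aestronglyMeasurable (by fun_prop)
    · fun_prop
  have hR0 : R 0 = 1 / 4 := by
    simp only [hR, Real.sqrt_zero, mul_zero, zero_mul, hσ]
    norm_num
  have hRnn : ∀ C, 0 ≤ R C := fun C => integral_nonneg fun y => sq_nonneg _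
  have hφc := continuous_dslope_tanh_gru
  set φ := dslope Real.tanh 0 with hφ
  set G : ℝ → ℝ := fun t => ∫ x, x ^ 2 * φ (t * x) ^ 2 ∂(gaussianReal 0 1) with hG
  have hGc : Continuous G := by
    refine continuous_of_dominated (bound := fun x => x ^ 2) (fun C => ?_)
      (fun C => ae_of_all _ fun y => ?_) integrable_sq_gru (ae_of_all _ fun y => ?_)
    · exact Continuous.aestronglyMeasurable (by fun_prop)
    · rw [Real.norm_of_nonneg (by positivity)]
      exact mul_le_of_le_one_right (sq_nonneg _) (dslope_tanh_sq_le_gru _)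
    · fun_prop
  have hG0 : G 0 = 1 := by
    simp only [hG, zero_mul, hφ, dslope_tanh_zero_gru, one_pow, mul_one]
    exact integral_sq_gru
  have hF : ∀ t, ∫ x, Real.tanh (t * x) ^ 2 ∂(gaussianReal 0 1) = t ^ 2 * G t := fun t => by
    rw [hG, ← integral_const_mul]
    congr 1
    ext x
    rw [← mul_dslope_tanh_gru]
    ring
  set H : ℝ → ℝ := fun C => a_h ^ 2 * R C * G (a_h * Real.sqrt (C * R C)) with hH
  have hHc : Continuous H := by fun_prop
  have key : ∀ C, 0 ≤ C →
      ∫ x, Real.tanh (a_h * Real.sqrt (C * R C) * x) ^ 2 ∂(gaussianReal 0 1) = C * H C := by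
    intro C hC
    rw [hF, mul_pow, Real.sq_sqrt (mul_nonneg hC (hRnn C))]
    simp only [hH]
    ring
  have hH0 : 1 < H 0 := by
    simp only [hH, zero_mul, Real.sqrt_zero, mul_zero, hG0, hR0]
    nlinarith
  have hH1 : H 1 ≤ 1 := by
    rw [← one_mul (H 1), ← key 1 zero_le_one]
    have := integral_mono_of_nonneg (μ := gaussianReal 0 1)
      (f := fun x => Real.tanh (a_h * Real.sqrt (1 * R 1) * x) ^ 2) (g := fun _ => (1 : ℝ))
      (ae_of_all _ fun x => sq_nonneg _) (integrable_const _)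
      (ae_of_all _ fun x => (Real.tanh_sq_lt_one _).le)
    simpa using this
  obtain ⟨C, hC, hC1⟩ := intermediate_value_Icc' zero_le_one hHc.continuousOn
    (Set.mem_Icc.2 ⟨hH1, hH0.le⟩)
  refine ⟨C, lt_of_le_of_ne hC.1 ?_, ?_⟩
  · rintro rfl
    exact hH0.ne' hC1
  · have := key C hC.1
    rw [hC1, mul_one] at this
    exact this.symm
end

section
/- Fix a_r with 0 ≤ a_r < 2√2, and let γ be the standard Gaussian measure on ℝ. There exist ε₀ > 0 and a function C : (0, ε₀) → (0, ∞) such that for every ε ∈ (0, ε₀), C(ε) satisfies the GRU mean-field fixed-point equation C(ε) = ∫ tanh( (2+ε)·√( C(ε)·R(C(ε)) )·x )² dγ(x), where R(C) = ∫ σ(a_r·√C·x)² dγ(x), and moreover lim_{ε→0⁺} C(ε)/ε = 4/(8 − a_r²). -/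
open MeasureTheory ProbabilityTheory Filter

/-!
Write `T s = ∫ tanh(√s x)² dγ(x)`. The sigmoid is `σ z = (1 + tanh (z/2)) / 2` and `tanh` is odd,
so `R(C) = (1 + T(bC)) / 4` with `b = a_r²/4 < 2`, and the fixed-point equation becomes `C = Φ(C)`
with `Φ(C) = T((1 + ε/2)² (1 + T(bC)) C)`.

The bounds `u² - (2/3) u⁴ ≤ tanh² u ≤ u² - (2/3) u⁴ + u⁶` and the Gaussian moments `1, 3, 15` give
`s - 2s² ≤ T s ≤ s - 2s² + 15s³`. Consequently, uniformly for `ε, C ∈ [0, 1]`,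
`Φ(C) - C = C (ε - (2 - b) C) + O(C (ε² + C²))` (`abs_fixedPointMap_sub_le`).

With `L = 1/(2 - b) = 4/(8 - a_r²)`, this expansion makes `Φ(C) - C` nonnegative at `C = Lε/2` and
nonpositive at `C = 2Lε` for small `ε`. As `T` is continuous, the intermediate value theorem gives
a solution in `[Lε/2, 2Lε]`. Any such solution satisfies `|ε - (2 - b) C| = O(ε²)` by the same
expansion, that is `C/ε = L + O(ε)` (`exists_fixed_point`).
-/

/-! ### Polynomial bounds for the hyperbolic tangent -/

lemma hasDerivAt_tanh (x : ℝ) : HasDerivAt Real.tanh (1 - Real.tanh x ^ 2) x := by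
  have hc : Real.cosh x ≠ 0 := (Real.cosh_pos x).ne'
  have h := (Real.hasDerivAt_sinh x).div (Real.hasDerivAt_cosh x) hc
  have he : Real.tanh = Real.sinh / Real.cosh := by
    funext y; simp [Real.tanh_eq_sinh_div_cosh]
  rw [he]
  convert! h using 1
  simp only [Pi.div_apply]
  field_simp

lemma continuous_tanh : Continuous Real.tanh :=
  continuous_iff_continuousAt.2 fun x => (hasDerivAt_tanh x).continuousAt

/-- The bounds on `tanh` follow from this criterion and `tanh' = 1 - tanh²`, each bound on `tanh`
feeding the derivative comparison for the next one. -/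
lemma nonneg_of_hasDerivAt {f f' : ℝ → ℝ} (h0 : f 0 = 0) (hf : ∀ x, HasDerivAt f (f' x) x)
    (hf' : ∀ x, 0 ≤ x → 0 ≤ f' x) {x : ℝ} (hx : 0 ≤ x) : 0 ≤ f x := by
  have hm : MonotoneOn f (Set.Ici 0) := by
    refine monotoneOn_of_deriv_nonneg (convex_Ici 0)
      (fun y _ => (hf y).continuousAt.continuousWithinAt)
      (fun y _ => (hf y).differentiableAt.differentiableWithinAt) fun y hy => ?_
    rw [(hf y).deriv]
    exact hf' y (interior_subset hy)
  rw [← h0]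
  exact hm Set.self_mem_Ici hx hx

lemma tanh_nonneg {x : ℝ} (hx : 0 ≤ x) : 0 ≤ Real.tanh x :=
  nonneg_of_hasDerivAt Real.tanh_zero hasDerivAt_tanh
    (fun y _ => sub_nonneg.2 (Real.tanh_sq_lt_one y).le) hx

lemma tanh_le_self {x : ℝ} (hx : 0 ≤ x) : Real.tanh x ≤ x := by
  have := nonneg_of_hasDerivAt (f := fun y => y - Real.tanh y) (by simp)
    (fun y => (hasDerivAt_id y).sub (hasDerivAt_tanh y)) (fun y _ => by nlinarith) hx
  linarith

lemma tanh_lower {x : ℝ} (hx : 0 ≤ x) : x - x ^ 3 / 3 ≤ Real.tanh x := by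
  have := nonneg_of_hasDerivAt (f := fun y => Real.tanh y - (y - y ^ 3 / 3)) (by simp)
    (fun y => (hasDerivAt_tanh y).sub ((hasDerivAt_id y).sub ((hasDerivAt_pow 3 y).div_const 3)))
    (fun y hy => by
      have := pow_le_pow_left₀ (tanh_nonneg hy) (tanh_le_self hy) 2
      norm_num
      linarith) hx
  linarith

lemma tanh_sq_lower (x : ℝ) : x ^ 2 - 2 / 3 * x ^ 4 ≤ Real.tanh x ^ 2 := by
  wlog hx : 0 ≤ x generalizing x
  · simpa [Even.neg_pow (show Even 4 by decide)] using this (-x) (by linarith)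
  rcases le_or_gt (x ^ 2) 3 with h | h
  · have h1 : 0 ≤ x - x ^ 3 / 3 := by nlinarith
    have := pow_le_pow_left₀ h1 (tanh_lower hx) 2
    nlinarith [sq_nonneg (x ^ 3)]
  · nlinarith [sq_nonneg (Real.tanh x)]

lemma tanh_upper {x : ℝ} (hx : 0 ≤ x) : Real.tanh x ≤ x - x ^ 3 / 3 + 2 / 15 * x ^ 5 := by
  have := nonneg_of_hasDerivAt (f := fun y => (y - y ^ 3 / 3 + 2 / 15 * y ^ 5) - Real.tanh y)
    (by simp)
    (fun y => (((hasDerivAt_id y).sub ((hasDerivAt_pow 3 y).div_const 3)).add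
      ((hasDerivAt_pow 5 y).const_mul (2 / 15))).sub (hasDerivAt_tanh y))
    (fun y hy => by
      have := tanh_sq_lower y
      norm_num
      linarith) hx
  linarith

lemma tanh_sq_le_sq (x : ℝ) : Real.tanh x ^ 2 ≤ x ^ 2 := by
  wlog hx : 0 ≤ x generalizing x
  · simpa using this (-x) (by linarith)
  exact pow_le_pow_left₀ (tanh_nonneg hx) (tanh_le_self hx) 2

lemma tanh_sq_upper (x : ℝ) : Real.tanh x ^ 2 ≤ x ^ 2 - 2 / 3 * x ^ 4 + x ^ 6 := by
  wlog hx : 0 ≤ x generalizing x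
  · simpa [Even.neg_pow (show Even 4 by decide), Even.neg_pow (show Even 6 by decide)]
      using this (-x) (by linarith)
  rcases le_or_gt x 1 with h | h
  · have := pow_le_pow_left₀ (tanh_nonneg hx) (tanh_upper hx) 2
    have h2 : x ^ 10 ≤ x ^ 6 := pow_le_pow_of_le_one hx h (by norm_num)
    nlinarith [pow_nonneg hx 8, pow_nonneg hx 6]
  · have h1 : x ^ 4 ≤ x ^ 6 := pow_le_pow_right₀ h.le (by norm_num)
    nlinarith [tanh_sq_le_sq x, pow_nonneg hx 4]

/-! ### Gaussian moments -/

lemma integrable_pow_gaussian (n : ℕ) : Integrable (fun x : ℝ => x ^ n) (gaussianReal 0 1) := by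
  have h := (memLp_id_gaussianReal' (μ := 0) (v := 1) (n : ENNReal) (by simp)).integrable_norm_pow'
  refine h.mono' (by fun_prop) (ae_of_all _ fun x => by simp)

lemma hasDerivAt_poly_mul_exp {p : ℝ → ℝ} {p' x : ℝ} (hp : HasDerivAt p p' x) :
    HasDerivAt (fun t => p t * Real.exp (t ^ 2 / 2)) ((p' + x * p x) * Real.exp (x ^ 2 / 2)) x := by
  have h := hp.mul ((hasDerivAt_pow 2 x).div_const 2).exp
  convert! h using 1
  push_cast
  ring

/-- The moment generating function of the standard Gaussian is `exp (t² / 2)`. The factor `1` puts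
it in the form of `hasDerivAt_poly_mul_exp`. -/
lemma integral_pow_eq (n : ℕ) : ∫ x, x ^ n ∂(gaussianReal 0 1)
    = iteratedDeriv n (fun t : ℝ => 1 * Real.exp (t ^ 2 / 2)) 0 := by
  have h := iteratedDeriv_mgf_zero (X := id) (μ := gaussianReal 0 1)
    (by simp [integrableExpSet_id_gaussianReal]) n
  rw [mgf_id_gaussianReal] at h
  simpa using h.symm

lemma gaussian_moments : ∫ x, x ^ 2 ∂(gaussianReal 0 1) = 1 ∧
    ∫ x, x ^ 4 ∂(gaussianReal 0 1) = 3 ∧ ∫ x, x ^ 6 ∂(gaussianReal 0 1) = 15 := by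
  have d1 : deriv (fun t : ℝ => 1 * Real.exp (t ^ 2 / 2)) = fun t => t * Real.exp (t ^ 2 / 2) := by
    funext t
    rw [(hasDerivAt_poly_mul_exp (hasDerivAt_const t (1 : ℝ))).deriv]; ring
  have d2 : deriv (fun t : ℝ => t * Real.exp (t ^ 2 / 2))
      = fun t => (1 + t ^ 2) * Real.exp (t ^ 2 / 2) := by
    funext t
    rw [(hasDerivAt_poly_mul_exp (hasDerivAt_id' t)).deriv]; ring
  have d3 : deriv (fun t : ℝ => (1 + t ^ 2) * Real.exp (t ^ 2 / 2))
      = fun t => (3 * t + t ^ 3) * Real.exp (t ^ 2 / 2) := by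
    funext t
    rw [(hasDerivAt_poly_mul_exp ((hasDerivAt_pow 2 t).const_add 1)).deriv]; push_cast; ring
  have d4 : deriv (fun t : ℝ => (3 * t + t ^ 3) * Real.exp (t ^ 2 / 2))
      = fun t => (3 + 6 * t ^ 2 + t ^ 4) * Real.exp (t ^ 2 / 2) := by
    funext t
    rw [(hasDerivAt_poly_mul_exp
      (((hasDerivAt_id' t).const_mul 3).fun_add (hasDerivAt_pow 3 t))).deriv]
    push_cast; ring
  have d5 : deriv (fun t : ℝ => (3 + 6 * t ^ 2 + t ^ 4) * Real.exp (t ^ 2 / 2))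
      = fun t => (15 * t + 10 * t ^ 3 + t ^ 5) * Real.exp (t ^ 2 / 2) := by
    funext t
    rw [(hasDerivAt_poly_mul_exp
      ((((hasDerivAt_pow 2 t).const_mul 6).const_add 3).fun_add (hasDerivAt_pow 4 t))).deriv]
    push_cast; ring
  have d6 : deriv (fun t : ℝ => (15 * t + 10 * t ^ 3 + t ^ 5) * Real.exp (t ^ 2 / 2))
      = fun t => (15 + 45 * t ^ 2 + 15 * t ^ 4 + t ^ 6) * Real.exp (t ^ 2 / 2) := by
    funext t
    rw [(hasDerivAt_poly_mul_exp ((((hasDerivAt_id' t).const_mul 15).fun_add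
      ((hasDerivAt_pow 3 t).const_mul 10)).fun_add (hasDerivAt_pow 5 t))).deriv]
    push_cast; ring
  refine ⟨?_, ?_, ?_⟩ <;> rw [integral_pow_eq] <;>
    simp only [iteratedDeriv_succ', iteratedDeriv_zero, d1, d2, d3, d4, d5, d6] <;> norm_num

/-! ### The Gaussian average of the squared hyperbolic tangent -/

/-- The mean of `tanh²` under a centred Gaussian of variance `s ≥ 0`, written as an average over
the standard Gaussian. For `s < 0` the convention `√s = 0` makes it `0`, so that it is continuous
on all of `ℝ`. -/
noncomputable def meanSqTanh (s : ℝ) : ℝ :=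
  ∫ x, Real.tanh (Real.sqrt s * x) ^ 2 ∂(gaussianReal 0 1)

lemma integrable_tanh_sq (c : ℝ) :
    Integrable (fun x => Real.tanh (c * x) ^ 2) (gaussianReal 0 1) := by
  refine (integrable_const (1 : ℝ)).mono'
    (((continuous_tanh.comp (continuous_const.mul continuous_id)).pow 2).aestronglyMeasurable)
    (ae_of_all _ fun x => ?_)
  rw [Real.norm_of_nonneg (sq_nonneg _)]
  exact (Real.tanh_sq_lt_one _).le

lemma integrable_tanh (c : ℝ) :
    Integrable (fun x => Real.tanh (c * x)) (gaussianReal 0 1) := by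
  refine (integrable_const (1 : ℝ)).mono'
    ((continuous_tanh.comp (continuous_const.mul continuous_id)).aestronglyMeasurable)
    (ae_of_all _ fun x => (Real.abs_tanh_lt_one _).le)

lemma integral_tanh_eq_zero (c : ℝ) : ∫ x, Real.tanh (c * x) ∂(gaussianReal 0 1) = 0 := by
  have h : ∫ x, Real.tanh (c * x) ∂(gaussianReal 0 1)
      = ∫ x, Real.tanh (c * -x) ∂(gaussianReal 0 1) := by
    have hm : (gaussianReal 0 1).map (fun x => -x) = gaussianReal 0 1 := by
      simpa using gaussianReal_map_neg (μ := 0) (v := 1)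
    conv_lhs => rw [← hm]
    exact integral_map (by fun_prop)
      (continuous_tanh.comp (continuous_const.mul continuous_id)).aestronglyMeasurable
  simp only [mul_neg, Real.tanh_neg, integral_neg] at h
  linarith

lemma continuous_meanSqTanh : Continuous meanSqTanh := by
  refine continuous_of_dominated (bound := fun _ => 1)
    (fun s => (integrable_tanh_sq _).aestronglyMeasurable) (fun s => ae_of_all _ fun x => ?_)
    (integrable_const _) (ae_of_all _ fun x => ?_)
  · rw [Real.norm_of_nonneg (sq_nonneg _)]
    exact (Real.tanh_sq_lt_one _).le
  · exact (continuous_tanh.comp (Real.continuous_sqrt.mul continuous_const)).pow 2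

lemma meanSqTanh_nonneg (s : ℝ) : 0 ≤ meanSqTanh s := integral_nonneg fun _ => sq_nonneg _

lemma meanSqTanh_le {s : ℝ} (hs : 0 ≤ s) : meanSqTanh s ≤ s := by
  have h : meanSqTanh s ≤ ∫ x, s * x ^ 2 ∂(gaussianReal 0 1) := by
    refine integral_mono (integrable_tanh_sq _) ((integrable_pow_gaussian 2).const_mul s)
      fun x => ?_
    have := tanh_sq_le_sq (Real.sqrt s * x)
    rwa [mul_pow, Real.sq_sqrt hs] at this
  rwa [integral_const_mul, gaussian_moments.1, mul_one] at h

lemma sqrt_pow_four {s : ℝ} (hs : 0 ≤ s) : Real.sqrt s ^ 4 = s ^ 2 := by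
  rw [show (4 : ℕ) = 2 * 2 from rfl, pow_mul, Real.sq_sqrt hs]

lemma sqrt_pow_six {s : ℝ} (hs : 0 ≤ s) : Real.sqrt s ^ 6 = s ^ 3 := by
  rw [show (6 : ℕ) = 2 * 3 from rfl, pow_mul, Real.sq_sqrt hs]

lemma meanSqTanh_lower {s : ℝ} (hs : 0 ≤ s) : s - 2 * s ^ 2 ≤ meanSqTanh s := by
  have i2 := (integrable_pow_gaussian 2).const_mul s
  have i4 := (integrable_pow_gaussian 4).const_mul (2 / 3 * s ^ 2)
  have h : ∫ x, (s * x ^ 2 - 2 / 3 * s ^ 2 * x ^ 4) ∂(gaussianReal 0 1) ≤ meanSqTanh s := by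
    refine integral_mono (i2.sub i4) (integrable_tanh_sq _) fun x => ?_
    have := tanh_sq_lower (Real.sqrt s * x)
    rw [mul_pow, mul_pow, Real.sq_sqrt hs, sqrt_pow_four hs] at this
    linarith
  rw [integral_sub i2 i4, integral_const_mul, integral_const_mul, gaussian_moments.1,
    gaussian_moments.2.1] at h
  linarith

lemma meanSqTanh_upper {s : ℝ} (hs : 0 ≤ s) :
    meanSqTanh s ≤ s - 2 * s ^ 2 + 15 * s ^ 3 := by
  have i2 := (integrable_pow_gaussian 2).const_mul s
  have i4 := (integrable_pow_gaussian 4).const_mul (2 / 3 * s ^ 2)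
  have i6 := (integrable_pow_gaussian 6).const_mul (s ^ 3)
  have i24 : Integrable (fun x : ℝ => s * x ^ 2 - 2 / 3 * s ^ 2 * x ^ 4) (gaussianReal 0 1) :=
    i2.sub i4
  have h : meanSqTanh s ≤
      ∫ x, ((s * x ^ 2 - 2 / 3 * s ^ 2 * x ^ 4) + s ^ 3 * x ^ 6) ∂(gaussianReal 0 1) := by
    refine integral_mono (integrable_tanh_sq _) (i24.add i6) fun x => ?_
    have := tanh_sq_upper (Real.sqrt s * x)
    rw [mul_pow, mul_pow, mul_pow, Real.sq_sqrt hs, sqrt_pow_four hs, sqrt_pow_six hs] at this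
    linarith
  rw [integral_add i24 i6, integral_sub i2 i4, integral_const_mul, integral_const_mul,
    integral_const_mul, gaussian_moments.1, gaussian_moments.2.1, gaussian_moments.2.2] at h
  linarith

/-! ### The reset gate -/

lemma sigmoid_eq (z : ℝ) : 1 / (1 + Real.exp (-z)) = (1 + Real.tanh (z / 2)) / 2 := by
  have h1 : Real.exp (-z) = Real.exp (-(z / 2)) * Real.exp (-(z / 2)) := by
    rw [← Real.exp_add]; ring_nf
  have h2 : Real.exp (z / 2) * Real.exp (-(z / 2)) = 1 := by
    rw [← Real.exp_add]; simp
  have p1 := Real.exp_pos (z / 2)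
  have p2 := Real.exp_pos (-(z / 2))
  rw [Real.tanh_eq, h1]
  generalize Real.exp (z / 2) = u at *
  generalize Real.exp (-(z / 2)) = v at *
  field_simp
  linear_combination -2 * v * h2

/-- The reset-gate average `R(C)` in terms of `meanSqTanh`: the term linear in `tanh` integrates
to zero by symmetry. -/
lemma integral_sigmoid_sq {a C : ℝ} (ha : 0 ≤ a) :
    ∫ y, (1 / (1 + Real.exp (-(a * Real.sqrt C * y)))) ^ 2 ∂(gaussianReal 0 1)
      = (1 + meanSqTanh (a ^ 2 / 4 * C)) / 4 := by
  have hs : Real.sqrt (a ^ 2 / 4 * C) = a / 2 * Real.sqrt C := by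
    rw [show a ^ 2 / 4 = (a / 2) ^ 2 by ring, Real.sqrt_mul (sq_nonneg _),
      Real.sqrt_sq (by positivity)]
  have hpt : ∀ y, (1 / (1 + Real.exp (-(a * Real.sqrt C * y)))) ^ 2
      = (1 / 4 + 1 / 2 * Real.tanh (a / 2 * Real.sqrt C * y))
        + 1 / 4 * Real.tanh (a / 2 * Real.sqrt C * y) ^ 2 := fun y => by
    rw [sigmoid_eq, show a * Real.sqrt C * y / 2 = a / 2 * Real.sqrt C * y by ring]
    ring
  have i1 := (integrable_tanh (a / 2 * Real.sqrt C)).const_mul (1 / 2)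
  have i2 := (integrable_tanh_sq (a / 2 * Real.sqrt C)).const_mul (1 / 4)
  have i01 : Integrable (fun y : ℝ => 1 / 4 + 1 / 2 * Real.tanh (a / 2 * Real.sqrt C * y))
      (gaussianReal 0 1) := (integrable_const _).add i1
  simp only [hpt]
  rw [integral_add i01 i2, integral_add (integrable_const _) i1,
    integral_const_mul, integral_const_mul, integral_tanh_eq_zero, meanSqTanh, hs]
  simp
  ring

/-! ### Expansion of the fixed-point map and the branch of solutions -/

/-- The algebraic part of `abs_fixedPointMap_sub_le`. Here `r` stands for `meanSqTanh (b * C)`,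
`p * C` for the variance of the argument of the outer `tanh`, and `T` for `meanSqTanh (p * C)`;
only the polynomial bounds on `r` and `T` matter. -/
lemma fixed_point_map_expansion {b e C r p T : ℝ} (hb0 : 0 ≤ b) (hb2 : b ≤ 2)
    (he0 : 0 ≤ e) (he1 : e ≤ 1) (hC0 : 0 ≤ C) (hC1 : C ≤ 1)
    (hr1 : b * C - 2 * (b * C) ^ 2 ≤ r) (hr2 : r ≤ b * C) (hr0 : 0 ≤ r)
    (hp : p = (1 + e / 2) ^ 2 * (1 + r))
    (hT1 : p * C - 2 * (p * C) ^ 2 ≤ T)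
    (hT2 : T ≤ p * C - 2 * (p * C) ^ 2 + 15 * (p * C) ^ 3) :
    |T - C - C * (e - (2 - b) * C)| ≤ 12000 * C * (e ^ 2 + C ^ 2) := by
  have hbC : b * C ≤ 2 * C := by nlinarith
  have hbC0 : 0 ≤ b * C := by positivity
  have hr3 : r ≤ 2 * C := by linarith
  have hp1 : 1 ≤ p := by rw [hp]; nlinarith
  have hpe : p - 1 - e - b * C = e ^ 2 / 4 + (e + e ^ 2 / 4) * r + (r - b * C) := by rw [hp]; ring
  have hee : e ^ 2 ≤ e := by nlinarith
  have heC : e * C ≤ e := by nlinarith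
  have hAG : 2 * (e * C) ≤ e ^ 2 + C ^ 2 := by nlinarith [sq_nonneg (e - C)]
  have hS0 : 0 ≤ e ^ 2 := sq_nonneg e
  have hC20 : 0 ≤ C ^ 2 := sq_nonneg C
  have her : (e + e ^ 2 / 4) * r ≤ 5 / 4 * e * (2 * C) :=
    mul_le_mul (by linarith) hr3 hr0 (by positivity)
  have her0 : 0 ≤ (e + e ^ 2 / 4) * r := by positivity
  have hbC2 : (b * C) ^ 2 ≤ 4 * C ^ 2 := by
    have := pow_le_pow_left₀ hbC0 hbC 2
    linarith
  have hA1 : p - 1 - e - b * C ≤ 10 * (e ^ 2 + C ^ 2) := by linarith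
  have hA2 : -(10 * (e ^ 2 + C ^ 2)) ≤ p - 1 - e - b * C := by linarith
  have hp4 : p - 1 ≤ 4 * (e + C) := by linarith
  have hp9 : p ≤ 9 := by linarith
  have hB0 : 0 ≤ (p ^ 2 - 1) * C := mul_nonneg (by nlinarith) hC0
  have hB : (p ^ 2 - 1) * C ≤ 80 * (e ^ 2 + C ^ 2) := by
    have h1 : (p + 1) * (p - 1) ≤ 10 * (4 * (e + C)) :=
      mul_le_mul (by linarith) hp4 (by linarith) (by norm_num)
    have h2 := mul_le_mul_of_nonneg_right h1 hC0
    linarith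
  have hp3 : p ^ 3 ≤ 9 ^ 3 := pow_le_pow_left₀ (by linarith) hp9 3
  have hp3C : p ^ 3 * C ^ 2 ≤ 9 ^ 3 * C ^ 2 := mul_le_mul_of_nonneg_right hp3 (sq_nonneg C)
  have hp30 : 0 ≤ p ^ 3 * C ^ 2 := by positivity
  -- After removing a factor `C`, the error splits into the three terms bounded above.
  have key : p * C - 2 * (p * C) ^ 2 - C - C * (e - (2 - b) * C)
      = C * ((p - 1 - e - b * C) - 2 * ((p ^ 2 - 1) * C)) := by ring
  have key2 : 15 * (p * C) ^ 3 = C * (15 * (p ^ 3 * C ^ 2)) := by ring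
  have u1 : C * ((p - 1 - e - b * C) - 2 * ((p ^ 2 - 1) * C)) + C * (15 * (p ^ 3 * C ^ 2))
      ≤ C * (12000 * (e ^ 2 + C ^ 2)) := by
    rw [← mul_add]; exact mul_le_mul_of_nonneg_left (by linarith) hC0
  have u2 : C * (-(12000 * (e ^ 2 + C ^ 2)))
      ≤ C * ((p - 1 - e - b * C) - 2 * ((p ^ 2 - 1) * C)) := by
    exact mul_le_mul_of_nonneg_left (by linarith) hC0
  rw [abs_le]
  constructor <;> linarith

/-- Right-hand side of the fixed-point equation with `a_h = 2 + e` and `b = a_r² / 4`. The argument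
`(1 + e/2)² (1 + meanSqTanh (b C)) C` is `(2 + e)² C R(C)`. -/
noncomputable def fixedPointMap (b e C : ℝ) : ℝ :=
  meanSqTanh ((1 + e / 2) ^ 2 * (1 + meanSqTanh (b * C)) * C)

lemma continuous_fixedPointMap (b e : ℝ) : Continuous (fixedPointMap b e) :=
  continuous_meanSqTanh.comp ((continuous_const.mul (continuous_const.add
    (continuous_meanSqTanh.comp (continuous_const.mul continuous_id)))).mul continuous_id)

lemma abs_fixedPointMap_sub_le {b e C : ℝ} (hb0 : 0 ≤ b) (hb2 : b ≤ 2)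
    (he0 : 0 ≤ e) (he1 : e ≤ 1) (hC0 : 0 ≤ C) (hC1 : C ≤ 1) :
    |fixedPointMap b e C - C - C * (e - (2 - b) * C)| ≤ 12000 * C * (e ^ 2 + C ^ 2) := by
  have hbC : 0 ≤ b * C := mul_nonneg hb0 hC0
  have hr0 := meanSqTanh_nonneg (b * C)
  have hs : 0 ≤ (1 + e / 2) ^ 2 * (1 + meanSqTanh (b * C)) * C := by positivity
  exact fixed_point_map_expansion hb0 hb2 he0 he1 hC0 hC1 (meanSqTanh_lower hbC)
    (meanSqTanh_le hbC) hr0 rfl (meanSqTanh_lower hs) (meanSqTanh_upper hs)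

/-- Existence of the nonzero fixed point for small `e`, with `C / e` within `O(e)` of
`L = 1 / (2 - b)`. -/
lemma exists_fixed_point {b L e : ℝ} (hb0 : 0 ≤ b) (hb2 : b < 2) (hL : (2 - b) * L = 1)
    (he0 : 0 < e) (he : e * (1 + 2 * L + 24000 * (1 + 4 * L ^ 2)) ≤ 1) :
    ∃ C, 0 < C ∧ C = fixedPointMap b e C ∧
      |C / e - L| ≤ 12000 * L * (1 + 4 * L ^ 2) * e := by
  have hd : 0 < 2 - b := by linarith
  have hL0 : 0 < L := by
    by_contra h
    nlinarith
  have hLe : 0 < L * e := mul_pos hL0 he0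
  have hL2e : 0 ≤ L ^ 2 * e := by positivity
  have hL2e2 : 0 ≤ L ^ 2 * e ^ 2 := by positivity
  have he1 : e ≤ 1 := by linarith
  have hLe1 : 2 * L * e ≤ 1 := by linarith
  have hK : 12000 * (1 + 4 * L ^ 2) * e ≤ 1 / 2 := by linarith
  have hK2 : 12000 * (1 + 4 * L ^ 2) * e ^ 2 ≤ e / 2 := by
    have := mul_le_mul_of_nonneg_right hK he0.le
    linarith
  have hlow : L * e / 2 ≤ fixedPointMap b e (L * e / 2) := by
    have h := (abs_le.1 (abs_fixedPointMap_sub_le hb0 hb2.le he0.le he1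
      (C := L * e / 2) (by linarith) (by linarith))).1
    have h1 : (2 - b) * (L * e / 2) = e / 2 := by linear_combination e / 2 * hL
    rw [h1] at h
    have h2 := mul_le_mul_of_nonneg_left (b := 12000 * (e ^ 2 + (L * e / 2) ^ 2))
      (c := e / 2) (by linarith) (show 0 ≤ L * e / 2 by linarith)
    linarith
  have hhigh : fixedPointMap b e (2 * L * e) ≤ 2 * L * e := by
    have h := (abs_le.1 (abs_fixedPointMap_sub_le hb0 hb2.le he0.le he1
      (C := 2 * L * e) (by linarith) (by linarith))).2
    have h1 : (2 - b) * (2 * L * e) = 2 * e := by linear_combination 2 * e * hL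
    rw [h1] at h
    have h2 := mul_le_mul_of_nonneg_left (b := 12000 * (e ^ 2 + (2 * L * e) ^ 2))
      (c := e) (by linarith) (show 0 ≤ 2 * L * e by linarith)
    linarith
  -- `fixedPointMap b e C - C` changes sign on `[L e / 2, 2 L e]`.
  obtain ⟨C, ⟨hC1, hC2⟩, hC⟩ := intermediate_value_Icc' (show L * e / 2 ≤ 2 * L * e by linarith)
    ((continuous_fixedPointMap b e).sub continuous_id).continuousOn
    (show (0 : ℝ) ∈ _ from ⟨sub_nonpos.2 hhigh, sub_nonneg.2 hlow⟩)
  have hC0 : 0 < C := by linarith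
  have hfix : fixedPointMap b e C - C = 0 := hC
  refine ⟨C, hC0, by linarith, ?_⟩
  have h := abs_fixedPointMap_sub_le hb0 hb2.le he0.le he1 hC0.le (hC2.trans hLe1)
  rw [hfix, zero_sub, abs_neg, abs_mul, abs_of_pos hC0] at h
  have h' : |e - (2 - b) * C| ≤ 12000 * (e ^ 2 + C ^ 2) :=
    le_of_mul_le_mul_left (by linarith) hC0
  have hCsq : C ^ 2 ≤ (2 * L * e) ^ 2 := pow_le_pow_left₀ hC0.le hC2 2
  have hEq : C / e - L = -(L / e) * (e - (2 - b) * C) := by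
    field_simp
    linear_combination -C * hL
  rw [hEq, abs_mul, abs_neg, abs_of_pos (div_pos hL0 he0)]
  calc L / e * |e - (2 - b) * C| ≤ L / e * (12000 * (1 + 4 * L ^ 2) * e ^ 2) :=
        mul_le_mul_of_nonneg_left (by linarith) (div_pos hL0 he0).le
    _ = 12000 * L * (1 + 4 * L ^ 2) * e := by field_simp

theorem gru_perturbative_fixed_point_branch
    (a_r : ℝ) (har0 : 0 ≤ a_r) (har : a_r < 2 * Real.sqrt 2)
    (σ : ℝ → ℝ) (hσ : ∀ x, σ x = 1 / (1 + Real.exp (-x))) :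
    ∃ ε₀ > (0 : ℝ), ∃ C : ℝ → ℝ,
      (∀ ε ∈ Set.Ioo (0 : ℝ) ε₀, 0 < C ε ∧
        C ε = ∫ x, (Real.tanh ((2 + ε) * Real.sqrt
            (C ε * ∫ y, (σ (a_r * Real.sqrt (C ε) * y)) ^ 2 ∂(gaussianReal 0 1)) * x)) ^ 2
          ∂(gaussianReal 0 1)) ∧
      Tendsto (fun ε => C ε / ε) (nhdsWithin 0 (Set.Ioi 0))
        (nhds (4 / (8 - a_r ^ 2))) := by
  have h8 : a_r ^ 2 < 8 := by
    have := pow_lt_pow_left₀ har har0 two_ne_zero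
    rw [mul_pow, Real.sq_sqrt (by norm_num)] at this
    linarith
  set L : ℝ := 4 / (8 - a_r ^ 2) with hLdef
  have hd : 0 < 8 - a_r ^ 2 := by linarith
  have hL0 : 0 < L := by positivity
  have hL : (2 - a_r ^ 2 / 4) * L = 1 := by rw [hLdef]; field_simp; ring
  have hD : 0 < 1 + 2 * L + 24000 * (1 + 4 * L ^ 2) := by positivity
  have hex : ∀ e : ℝ, ∃ C, e ∈ Set.Ioo 0 (1 / (1 + 2 * L + 24000 * (1 + 4 * L ^ 2))) →
      0 < C ∧ C = fixedPointMap (a_r ^ 2 / 4) e C ∧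
        |C / e - L| ≤ 12000 * L * (1 + 4 * L ^ 2) * e := fun e => by
    by_cases he : e ∈ Set.Ioo 0 (1 / (1 + 2 * L + 24000 * (1 + 4 * L ^ 2)))
    · obtain ⟨C, hC⟩ := exists_fixed_point (by positivity) (by linarith) hL he.1
        ((lt_div_iff₀ hD).1 he.2).le
      exact ⟨C, fun _ => hC⟩
    · exact ⟨0, fun h => absurd h he⟩
  choose C hC using hex
  refine ⟨_, one_div_pos.2 hD, C, fun e he => ?_, ?_⟩
  · obtain ⟨hC0, hfix, -⟩ := hC e he
    refine ⟨hC0, ?_⟩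
    simp only [hσ]
    rw [integral_sigmoid_sq har0]
    refine hfix.trans ?_
    have hs : Real.sqrt ((1 + e / 2) ^ 2 * (1 + meanSqTanh (a_r ^ 2 / 4 * C e)) * C e)
        = (2 + e) * Real.sqrt (C e * ((1 + meanSqTanh (a_r ^ 2 / 4 * C e)) / 4)) := by
      rw [← Real.sqrt_sq (show 0 ≤ 2 + e by linarith [he.1]), ← Real.sqrt_mul (sq_nonneg _)]
      ring_nf
    rw [fixedPointMap, meanSqTanh, hs]
  · rw [tendsto_iff_norm_sub_tendsto_zero]
    have hlim : Tendsto (fun e : ℝ => 12000 * L * (1 + 4 * L ^ 2) * e)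
        (nhdsWithin 0 (Set.Ioi 0)) (nhds 0) := by
      have : Tendsto (fun e : ℝ => 12000 * L * (1 + 4 * L ^ 2) * e) (nhds 0)
          (nhds (12000 * L * (1 + 4 * L ^ 2) * 0)) := tendsto_id.const_mul _
      rw [mul_zero] at this
      exact this.mono_left nhdsWithin_le_nhds
    refine squeeze_zero' (Eventually.of_forall fun _ => norm_nonneg _) ?_ hlim
    filter_upwards [Ioo_mem_nhdsGT (one_div_pos.2 hD)] with e he
    exact (hC e he).2.2
end
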